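/- arXiv:1010.0479 — 7 statements merged into one kernel-verified Lean document; each statement's English description precedes it below -/
import Mathlib

section
/- Let m ≥ 3 be odd and let G be a nontrivial subgroup of DihedralGroup m × DihedralGroup m. Then at least one of the following holds: (1) G is isomorphic to the cyclic group of order 2; (2) there is an odd r ≥ 3 with G isomorphic to the cyclic group of order r; (3) there is an odd r ≥ 3 with G isomorphic to the cyclic group of order 2r; (4) G is isomorphic to the Klein four-group Z_2 × Z_2; (5) there is an odd r ≥ 3 with G isomorphic to DihedralGroup r; (6) there is an odd r ≥ 3 with G isomorphic to DihedralGroup (2r); (7) there are odd r, s ≥ 3 with G isomorphic to (cyclic of order r) × (cyclic of order s); (8) there are odd r, s ≥ 3 with G isomorphic to DihedralGroup r × (cyclic of order s); (9) there are odd r, s ≥ 3 with G isomorphic to DihedralGroup r × DihedralGroup s; (10) there are odd r, s ≥ 3, a subgroup N of G isomorphic to (cyclic of order r) × (cyclic of order s) with index 2 in G, and an element φ of G with φ ∉ N, φ^2 = 1, and φ g φ⁻¹ = g⁻¹ for every g ∈ N. -/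
open DihedralGroup

lemma cyc_gen (m : ℕ) (K : AddSubgroup (ZMod m)) : ∃ a, AddSubgroup.zmultiples a = K := by
  obtain ⟨g, hg⟩ := IsAddCyclic.exists_generator (α := K)
  refine ⟨g, le_antisymm ?_ ?_⟩
  · rw [AddSubgroup.zmultiples_le]; exact g.2
  · intro x hx
    obtain ⟨k, hk⟩ := AddSubgroup.mem_zmultiples_iff.1 (hg ⟨x, hx⟩)
    exact AddSubgroup.mem_zmultiples_iff.2 ⟨k, by simpa using congrArg Subtype.val hk⟩

/-- Every subgroup of `ZMod m × ZMod m` is a product of two cyclic groups. -/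
lemma rank_two (m : ℕ) (hmodd : Odd m) (N : AddSubgroup (ZMod m × ZMod m)) :
    ∃ r s : ℕ, Odd r ∧ Odd s ∧ Nonempty ((ZMod r × ZMod s) ≃+ N) := by
  have : NeZero m := ⟨by rintro rfl; simp at hmodd⟩
  obtain ⟨a, ha⟩ := cyc_gen m (N.map (AddMonoidHom.fst _ _))
  obtain ⟨b, hb⟩ := cyc_gen m (N.comap (AddMonoidHom.inr (ZMod m) (ZMod m)))
  have ha' : a ∈ N.map (AddMonoidHom.fst _ _) := by
    rw [← ha]; exact AddSubgroup.mem_zmultiples a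
  have hb' : b ∈ N.comap (AddMonoidHom.inr (ZMod m) (ZMod m)) := by
    rw [← hb]; exact AddSubgroup.mem_zmultiples b
  obtain ⟨u, hu, hua⟩ := ha'
  let v : ZMod m × ZMod m := (0, b)
  have hv : v ∈ N := hb'
  let f : (Fin 2 → ℤ) →ₗ[ℤ] N :=
    Fintype.linearCombination ℤ (![⟨u, hu⟩, ⟨v, hv⟩] : Fin 2 → N)
  have hf : Function.Surjective f := by
    rintro ⟨x, hx⟩
    have h1 : x.1 ∈ N.map (AddMonoidHom.fst _ _) := ⟨x, hx, rfl⟩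
    rw [← ha] at h1
    obtain ⟨k, hk⟩ := AddSubgroup.mem_zmultiples_iff.1 h1
    have h2 : (x - k • u).2 ∈ N.comap (AddMonoidHom.inr (ZMod m) (ZMod m)) := by
      have h3 : x - k • u ∈ N := N.sub_mem hx (N.zsmul_mem hu k)
      have h4 : ((0 : ZMod m), (x - k • u).2) = x - k • u := by
        ext
        · simp only [Prod.fst_sub, Prod.smul_fst, ← hk, ← hua]
          simp
        · rfl
      show ((0 : ZMod m), (x - k • u).2) ∈ N
      rw [h4]; exact h3
    rw [← hb] at h2
    obtain ⟨l, hl⟩ := AddSubgroup.mem_zmultiples_iff.1 h2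
    refine ⟨![k, l], ?_⟩
    apply Subtype.ext
    simp only [f, Fintype.linearCombination_apply, Fin.sum_univ_two, Matrix.cons_val_zero,
      Matrix.cons_val_one, AddSubgroup.coe_add, AddSubgroup.coe_zsmul]
    ext
    · simp only [v, Prod.fst_add, Prod.smul_fst, ← hk, ← hua]
      simp
    · simp only [v, Prod.snd_add, Prod.smul_snd]
      rw [hl]; simp
  let e := f.quotKerEquivOfSurjective hf
  have : Finite ((Fin 2 → ℤ) ⧸ LinearMap.ker f) := Finite.of_equiv N e.symm.toEquiv
  have hr := (Submodule.finiteQuotient_iff (LinearMap.ker f)).1 inferInstance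
  let e2 := Submodule.quotientEquivPiZMod (LinearMap.ker f) (Pi.basisFun ℤ (Fin 2)) hr
  obtain ⟨c, ⟨e3⟩⟩ : ∃ c : Fin 2 → ℕ, Nonempty ((∀ i, ZMod (c i)) ≃+ N) :=
    ⟨_, ⟨e2.symm.trans e.toAddEquiv⟩⟩
  let e4 : (ZMod (c 0) × ZMod (c 1)) ≃+ N :=
    AddEquiv.trans
      { (piFinTwoEquiv (fun i => ZMod (c i))).symm with
        map_add' := by
          intro x y
          funext i
          fin_cases i <;> rfl } e3
  have hc : c 0 * c 1 ∣ m * m := by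
    have h1 := AddSubgroup.card_addSubgroup_dvd_card N
    rw [← Nat.card_congr e4.toEquiv] at h1
    simpa using h1
  have hodd := (hmodd.mul hmodd).of_dvd_nat hc
  exact ⟨c 0, c 1, (Nat.odd_mul.1 hodd).1, (Nat.odd_mul.1 hodd).2, ⟨e4⟩⟩

/-- Recognition of dihedral groups. -/
lemma dih {H : Type*} [Group H] (n : ℕ) (ψ : Multiplicative (ZMod n) →* H)
    (hψ : Function.Injective ψ) (φ : H) (h2 : φ * φ = 1) (hφ : φ ∉ ψ.range)
    (hinv : ∀ g, φ * ψ g * φ⁻¹ = (ψ g)⁻¹) (hall : ∀ h, h ∈ ψ.range ∨ φ * h ∈ ψ.range) :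
    Nonempty (H ≃* DihedralGroup n) := by
  have hφi : φ⁻¹ = φ := inv_eq_of_mul_eq_one_left h2
  have hc : ∀ g, ψ g * φ = φ * ψ (g⁻¹) := by
    intro g
    rw [map_inv, ← hinv, hφi, ← mul_assoc, ← mul_assoc, h2, one_mul]
  let F : DihedralGroup n → H := fun x => match x with
    | r i => ψ (Multiplicative.ofAdd i)
    | sr i => φ * ψ (Multiplicative.ofAdd i)
  have Fmul : ∀ x y, F (x * y) = F x * F y := by
    rintro (i | i) (j | j)
    · simp [F, ofAdd_add]
    · simp only [F, r_mul_sr]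
      rw [← mul_assoc, hc, mul_assoc, ← map_mul, ← ofAdd_neg, ← ofAdd_add]
      congr 3; ring
    · simp [F, ofAdd_add, mul_assoc]
    · simp only [F, sr_mul_sr]
      rw [mul_assoc, ← mul_assoc _ φ, hc, mul_assoc, ← map_mul, ← mul_assoc, h2, one_mul,
        ← ofAdd_neg, ← ofAdd_add]
      congr 2; ring
  have Finj : Function.Injective F := by
    rintro (i | i) (j | j) h
    · have := hψ h
      simpa using this
    · exfalso
      apply hφ
      refine ⟨Multiplicative.ofAdd i * (Multiplicative.ofAdd j)⁻¹, ?_⟩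
      rw [map_mul, map_inv]
      exact mul_inv_eq_of_eq_mul h
    · exfalso
      apply hφ
      refine ⟨Multiplicative.ofAdd j * (Multiplicative.ofAdd i)⁻¹, ?_⟩
      rw [map_mul, map_inv]
      exact mul_inv_eq_of_eq_mul h.symm
    · have := hψ (mul_left_cancel h)
      simpa using this
  have Fsurj : Function.Surjective F := by
    intro h
    rcases hall h with ⟨g, hg⟩ | ⟨g, hg⟩
    · exact ⟨r g.toAdd, hg⟩
    · refine ⟨sr g.toAdd, ?_⟩
      show φ * ψ g = h
      rw [hg, ← mul_assoc, h2, one_mul]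
  exact ⟨(MulEquiv.ofBijective (MonoidHom.mk' F Fmul) ⟨Finj, Fsurj⟩).symm⟩

/-- Subgroups of an odd dihedral group. -/
lemma sub_dih (m : ℕ) (hmodd : Odd m) (B : Subgroup (DihedralGroup m)) :
    ∃ b : ℕ, Odd b ∧
      (((∀ i, sr i ∉ B) ∧ Nonempty (B ≃* Multiplicative (ZMod b))) ∨
        Nonempty (B ≃* DihedralGroup b)) := by
  have : NeZero m := ⟨by rintro rfl; simp at hmodd⟩
  let K : AddSubgroup (ZMod m) :=
    { carrier := {i | r i ∈ B}
      zero_mem' := B.one_mem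
      add_mem' := fun {a b} ha hb => by simpa using B.mul_mem ha hb
      neg_mem' := fun {a} ha => by simpa using B.inv_mem ha }
  let e : ZMod (Nat.card K) ≃+ K := zmodAddCyclicAddEquiv inferInstance
  let ψ : Multiplicative (ZMod (Nat.card K)) →* B :=
    { toFun := fun g => ⟨r ((e g.toAdd : K) : ZMod m), (e g.toAdd).2⟩
      map_one' := by apply Subtype.ext; simp
      map_mul' := by intro x y; apply Subtype.ext; simp }
  have hψ : Function.Injective ψ := by
    intro x y h
    have h1 := congrArg Subtype.val h
    have h2 : ((e x.toAdd : K) : ZMod m) = ((e y.toAdd : K) : ZMod m) := by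
      simpa [ψ] using h1
    exact e.injective (Subtype.ext h2)
  have hran : ∀ x : B, x ∈ ψ.range ↔ ∃ i, x.1 = r i := by
    intro x
    constructor
    · rintro ⟨g, rfl⟩
      exact ⟨_, rfl⟩
    · rintro ⟨i, hi⟩
      have hiK : i ∈ K := by
        show r i ∈ B
        rw [← hi]; exact x.2
      refine ⟨Multiplicative.ofAdd (e.symm ⟨i, hiK⟩), ?_⟩
      apply Subtype.ext
      simp [ψ, hi]
  have hodd : Odd (Nat.card K) := by
    have h1 := AddSubgroup.card_addSubgroup_dvd_card K
    rw [Nat.card_zmod] at h1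
    exact hmodd.of_dvd_nat h1
  refine ⟨Nat.card K, hodd, ?_⟩
  by_cases h : ∀ i, sr i ∉ B
  · left
    refine ⟨h, ⟨(MulEquiv.ofBijective ψ ⟨hψ, ?_⟩).symm⟩⟩
    intro x
    refine (hran x).2 ?_
    rcases hx : x.1 with i | i
    · exact ⟨i, rfl⟩
    · exact absurd (hx ▸ x.2) (h i)
  · right
    push Not at h
    obtain ⟨i, hi⟩ := h
    refine dih _ ψ hψ ⟨sr i, hi⟩ ?_ ?_ ?_ ?_
    · apply Subtype.ext; simp
    · rw [hran]; simp
    · intro g; apply Subtype.ext; simp [ψ]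
    · intro x
      rw [hran, hran]
      rcases hx : x.1 with j | j
      · left; exact ⟨j, rfl⟩
      · right; exact ⟨j - i, by simp [hx]⟩

/-- The rotation part of a subgroup of the product. -/
lemma rot (m : ℕ) (hmodd : Odd m) (G : Subgroup (DihedralGroup m × DihedralGroup m)) :
    ∃ a b : ℕ, Odd a ∧ Odd b ∧
      ∃ ψ : Multiplicative (ZMod a) × Multiplicative (ZMod b) →* G,
        Function.Injective ψ ∧ ∀ x : G, x ∈ ψ.range ↔ ∃ i j, x.1 = (r i, r j) := by
  let N : AddSubgroup (ZMod m × ZMod m) :=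
    { carrier := {p | (r p.1, r p.2) ∈ G}
      zero_mem' := G.one_mem
      add_mem' := fun {a b} ha hb => by simpa using G.mul_mem ha hb
      neg_mem' := fun {a} ha => by simpa using G.inv_mem ha }
  obtain ⟨a, b, ha, hb, ⟨e⟩⟩ := rank_two m hmodd N
  let ψ : Multiplicative (ZMod a) × Multiplicative (ZMod b) →* G :=
    { toFun := fun g => ⟨(r (e (g.1.toAdd, g.2.toAdd) : ZMod m × ZMod m).1,
        r (e (g.1.toAdd, g.2.toAdd) : ZMod m × ZMod m).2), (e (g.1.toAdd, g.2.toAdd)).2⟩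
      map_one' := by
        apply Subtype.ext
        have : e (0, 0) = 0 := map_zero e
        simp [this]
      map_mul' := by
        intro x y
        apply Subtype.ext
        have := map_add e (x.1.toAdd, x.2.toAdd) (y.1.toAdd, y.2.toAdd)
        simp only [Prod.mk_add_mk] at this
        simp [this] }
  refine ⟨a, b, ha, hb, ψ, ?_, ?_⟩
  · intro x y h
    have h1 := congrArg Subtype.val h
    have h2 : (e (x.1.toAdd, x.2.toAdd) : ZMod m × ZMod m)
        = (e (y.1.toAdd, y.2.toAdd) : ZMod m × ZMod m) := by
      have h3 := congrArg Prod.fst h1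
      have h4 := congrArg Prod.snd h1
      exact Prod.ext (by simpa [ψ] using h3) (by simpa [ψ] using h4)
    exact e.injective (Subtype.ext h2)
  · intro x
    constructor
    · rintro ⟨g, rfl⟩
      exact ⟨_, _, rfl⟩
    · rintro ⟨i, j, hij⟩
      have hN : (i, j) ∈ N := by
        show (r i, r j) ∈ G
        rw [← hij]; exact x.2
      refine ⟨(Multiplicative.ofAdd (e.symm ⟨(i, j), hN⟩).1,
        Multiplicative.ofAdd (e.symm ⟨(i, j), hN⟩).2), ?_⟩
      apply Subtype.ext
      simp [ψ, hij]

/-- If `G` contains a reflection in the first factor only, it splits. -/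
lemma split (m : ℕ) (hmodd : Odd m) (G : Subgroup (DihedralGroup m × DihedralGroup m))
    (h : ∃ i j, (sr i, r j) ∈ G) :
    ∃ a b : ℕ, Odd a ∧ Odd b ∧
      (Nonempty (G ≃* DihedralGroup a × Multiplicative (ZMod b)) ∨
        Nonempty (G ≃* DihedralGroup a × DihedralGroup b)) := by
  obtain ⟨i, j, hij⟩ := h
  obtain ⟨t, ht⟩ := hmodd
  have hm0 : (2 * t + 1 : ZMod m) = 0 := by
    have := ZMod.natCast_self m
    rw [ht] at this ⊢
    push_cast at this
    exact this
  have hs : ((sr i, 1) : DihedralGroup m × DihedralGroup m) ∈ G := by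
    have h1 := G.pow_mem hij m
    have h2 : ((sr i, r j) : DihedralGroup m × DihedralGroup m) ^ m = (sr i, 1) := by
      rw [Prod.pow_mk]
      congr 1
      · have hpow : ∀ n, n = 2 * t + 1 → (sr i : DihedralGroup m) ^ n = sr i := by
          rintro n rfl
          rw [pow_succ, pow_mul, pow_two]; simp
        exact hpow m ht
      · simp
    rwa [h2] at h1
  have key : ∀ k y, (r k, y) ∈ G → ((r k, 1) : DihedralGroup m × DihedralGroup m) ∈ G := by
    intro k y hk
    have h1 := G.mul_mem hk (G.inv_mem (G.mul_mem (G.mul_mem hs hk) hs))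
    have h2 : (r k, y) * ((sr i, 1) * (r k, y) * (sr i, 1))⁻¹
        = ((r (2 * k), 1) : DihedralGroup m × DihedralGroup m) := by
      ext
      · simp; ring
      · simp
    rw [h2] at h1
    have h3 := G.inv_mem (G.pow_mem h1 t)
    have h4 : (((r (2 * k), 1) : DihedralGroup m × DihedralGroup m) ^ t)⁻¹ = (r k, 1) := by
      ext
      · simp
        linear_combination (-k) * hm0
      · simp
    rwa [h4] at h3
  let A := G.comap (MonoidHom.inl (DihedralGroup m) (DihedralGroup m))
  let B := G.comap (MonoidHom.inr (DihedralGroup m) (DihedralGroup m))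
  have key2 : ∀ x y, (x, y) ∈ G → ((x, 1) : DihedralGroup m × DihedralGroup m) ∈ G := by
    rintro (k | k) y hxy
    · exact key k y hxy
    · have h1 := G.mul_mem hs hxy
      rw [Prod.mk_mul_mk, sr_mul_sr] at h1
      have h2 := G.mul_mem hs (key _ _ h1)
      simpa using h2
  have hGAB : G = A.prod B := by
    ext ⟨x, y⟩
    rw [Subgroup.mem_prod]
    constructor
    · intro hxy
      refine ⟨key2 x y hxy, ?_⟩
      have := G.mul_mem (G.inv_mem (key2 x y hxy)) hxy
      simpa [B] using this
    · rintro ⟨h1, h2⟩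
      have := G.mul_mem h1 h2
      simpa using this
  have e : G ≃* A × B := (MulEquiv.subgroupCongr hGAB).trans (A.prodEquiv B)
  obtain ⟨a, ha, hA⟩ := sub_dih m ⟨t, ht⟩ A
  obtain ⟨b, hb, hB⟩ := sub_dih m ⟨t, ht⟩ B
  refine ⟨a, b, ha, hb, ?_⟩
  rcases hA with ⟨h1, -⟩ | ⟨⟨eA⟩⟩
  · exact absurd hs (h1 i)
  · rcases hB with ⟨-, ⟨eB⟩⟩ | ⟨⟨eB⟩⟩
    · left; exact ⟨e.trans (eA.prodCongr eB)⟩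
    · right; exact ⟨e.trans (eA.prodCongr eB)⟩

lemma dih_one : Nonempty (DihedralGroup 1 ≃* Multiplicative (ZMod 2)) := by
  have : Fact (Nat.Prime 2) := ⟨Nat.prime_two⟩
  exact ⟨mulEquivOfPrimeCardEq (p := 2) DihedralGroup.nat_card (Nat.card_zmod 2)⟩

lemma crt (n : ℕ) (hn : Odd n) :
    Nonempty (Multiplicative (ZMod 2) × Multiplicative (ZMod n) ≃*
      Multiplicative (ZMod (2 * n))) := by
  have hco : Nat.Coprime 2 n := Nat.coprime_two_left.2 hn
  let e := (ZMod.chineseRemainder hco).toAddEquiv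
  refine ⟨MulEquiv.mk' ⟨fun x => Multiplicative.ofAdd (e.symm (x.1.toAdd, x.2.toAdd)),
    fun x => (Multiplicative.ofAdd (e x.toAdd).1, Multiplicative.ofAdd (e x.toAdd).2), ?_, ?_⟩ ?_⟩
  · intro x; simp
  · intro x; simp
  · intro x y
    have := map_add e.symm (x.1.toAdd, x.2.toAdd) (y.1.toAdd, y.2.toAdd)
    exact this

lemma two_dih (n : ℕ) (hn : Odd n) :
    Nonempty (Multiplicative (ZMod 2) × DihedralGroup n ≃* DihedralGroup (2 * n)) := by
  obtain ⟨e⟩ := crt n hn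
  let ρ : Multiplicative (ZMod n) →* DihedralGroup n :=
    { toFun := fun g => r g.toAdd
      map_one' := rfl
      map_mul' := fun x y => by simp }
  have hρa : ∀ g, ρ g = r g.toAdd := fun _ => rfl
  have hρ : Function.Injective ρ := by
    intro x y h
    have : x.toAdd = y.toAdd := by simpa [hρa] using h
    exact this
  let ψ := (MonoidHom.prodMap (MonoidHom.id (Multiplicative (ZMod 2))) ρ).comp
    e.symm.toMonoidHom
  have hran : ∀ x, x ∈ ψ.range ↔ ∃ i, x.2 = r i := by
    intro x
    constructor
    · rintro ⟨g, rfl⟩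
      exact ⟨_, rfl⟩
    · rintro ⟨i, hi⟩
      refine ⟨e (x.1, Multiplicative.ofAdd i), ?_⟩
      ext
      · simp [ψ]
      · simp [ψ, hρa, hi]
  refine dih (2 * n) ψ ?_ (1, sr 0) ?_ ?_ ?_ ?_
  · exact (Function.injective_id.prodMap hρ).comp e.symm.injective
  · ext <;> simp
  · rw [hran]; simp
  · intro g
    ext
    · simp only [ψ, MonoidHom.comp_apply, Prod.fst_mul, Prod.fst_inv]
      simp
    · simp [ψ, hρa]
  · intro x
    rw [hran, hran]
    rcases hx : x.2 with j | j
    · left; exact ⟨j, rfl⟩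
    · right; exact ⟨j, by simp [hx]⟩

lemma prod_triv (H : Type*) [Group H] : Nonempty (H × Multiplicative (ZMod 1) ≃* H) := by
  have : Unique (Multiplicative (ZMod 1)) := inferInstanceAs (Unique (Fin 1))
  exact ⟨MulEquiv.prodUnique⟩

lemma triv_prod (H : Type*) [Group H] : Nonempty (Multiplicative (ZMod 1) × H ≃* H) := by
  have : Unique (Multiplicative (ZMod 1)) := inferInstanceAs (Unique (Fin 1))
  exact ⟨MulEquiv.uniqueProd⟩

lemma odd_cases {n : ℕ} (hn : Odd n) : n = 1 ∨ 3 ≤ n := by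
  obtain ⟨k, rfl⟩ := hn
  omega

theorem stmt0 (m : ℕ) (hm : 3 ≤ m) (hmodd : Odd m)
    (G : Subgroup (DihedralGroup m × DihedralGroup m)) (hG : G ≠ ⊥) :
    (Nonempty (G ≃* Multiplicative (ZMod 2))) ∨
    (∃ r : ℕ, Odd r ∧ 3 ≤ r ∧ Nonempty (G ≃* Multiplicative (ZMod r))) ∨
    (∃ r : ℕ, Odd r ∧ 3 ≤ r ∧ Nonempty (G ≃* Multiplicative (ZMod (2 * r)))) ∨
    (Nonempty (G ≃* Multiplicative (ZMod 2) × Multiplicative (ZMod 2))) ∨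
    (∃ r : ℕ, Odd r ∧ 3 ≤ r ∧ Nonempty (G ≃* DihedralGroup r)) ∨
    (∃ r : ℕ, Odd r ∧ 3 ≤ r ∧ Nonempty (G ≃* DihedralGroup (2 * r))) ∨
    (∃ r s : ℕ, Odd r ∧ 3 ≤ r ∧ Odd s ∧ 3 ≤ s ∧
      Nonempty (G ≃* Multiplicative (ZMod r) × Multiplicative (ZMod s))) ∨
    (∃ r s : ℕ, Odd r ∧ 3 ≤ r ∧ Odd s ∧ 3 ≤ s ∧
      Nonempty (G ≃* DihedralGroup r × Multiplicative (ZMod s))) ∨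
    (∃ r s : ℕ, Odd r ∧ 3 ≤ r ∧ Odd s ∧ 3 ≤ s ∧
      Nonempty (G ≃* DihedralGroup r × DihedralGroup s)) ∨
    (∃ r s : ℕ, Odd r ∧ 3 ≤ r ∧ Odd s ∧ 3 ≤ s ∧
      ∃ N : Subgroup G,
        Nonempty (N ≃* Multiplicative (ZMod r) × Multiplicative (ZMod s)) ∧
        N.index = 2 ∧
        ∃ φ : G, φ ∉ N ∧ φ ^ 2 = 1 ∧ ∀ g ∈ N, φ * g * φ⁻¹ = g⁻¹) := by

  have hsplit : (∃ a b : ℕ, Odd a ∧ Odd b ∧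
      (Nonempty (G ≃* DihedralGroup a × Multiplicative (ZMod b)) ∨
        Nonempty (G ≃* DihedralGroup a × DihedralGroup b))) ∨
      ∀ x ∈ G, (∃ i j, x = (r i, r j)) ∨ (∃ i j, x = (sr i, sr j)) := by
    by_cases h1 : ∃ i j, (sr i, r j) ∈ G
    · left; exact split m hmodd G h1
    by_cases h2 : ∃ i j, (r j, sr i) ∈ G
    · left
      obtain ⟨i, j, hij⟩ := h2
      let sw : DihedralGroup m × DihedralGroup m ≃* DihedralGroup m × DihedralGroup m :=
        MulEquiv.prodComm
      obtain ⟨a, b, ha, hb, hh⟩ := split m hmodd (G.map sw.toMonoidHom) ⟨i, j, _, hij, rfl⟩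
      have e : G ≃* G.map sw.toMonoidHom := G.equivMapOfInjective _ sw.injective
      refine ⟨a, b, ha, hb, ?_⟩
      rcases hh with ⟨⟨f⟩⟩ | ⟨⟨f⟩⟩
      · left; exact ⟨e.trans f⟩
      · right; exact ⟨e.trans f⟩
    · right
      push Not at h1 h2
      rintro ⟨i | i, j | j⟩ hx
      · left; exact ⟨i, j, rfl⟩
      · exact absurd hx (h2 j i)
      · exact absurd hx (h1 i j)
      · right; exact ⟨i, j, rfl⟩
  obtain ⟨d1⟩ := dih_one
  rcases hsplit with ⟨a, b, ha, hb, ⟨⟨e⟩⟩ | ⟨⟨e⟩⟩⟩ | hall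
  · rcases odd_cases ha with rfl | ha3
    · rcases odd_cases hb with rfl | hb3
      · left
        obtain ⟨t⟩ := prod_triv (DihedralGroup 1)
        exact ⟨(e.trans t).trans d1⟩
      · right; right; left
        obtain ⟨c⟩ := crt b hb
        exact ⟨b, hb, hb3, ⟨(e.trans (d1.prodCongr (MulEquiv.refl _))).trans c⟩⟩
    · rcases odd_cases hb with rfl | hb3
      · right; right; right; right; left
        obtain ⟨t⟩ := prod_triv (DihedralGroup a)
        exact ⟨a, ha, ha3, ⟨e.trans t⟩⟩
      · iterate 7 right
        left
        exact ⟨a, b, ha, ha3, hb, hb3, ⟨e⟩⟩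
  · rcases odd_cases ha with rfl | ha3
    · rcases odd_cases hb with rfl | hb3
      · right; right; right; left
        exact ⟨e.trans (d1.prodCongr d1)⟩
      · iterate 5 right
        left
        obtain ⟨c⟩ := two_dih b hb
        exact ⟨b, hb, hb3, ⟨(e.trans (d1.prodCongr (MulEquiv.refl _))).trans c⟩⟩
    · rcases odd_cases hb with rfl | hb3
      · iterate 5 right
        left
        obtain ⟨c⟩ := two_dih a ha
        exact ⟨a, ha, ha3,
          ⟨((e.trans (MulEquiv.prodComm)).trans (d1.prodCongr (MulEquiv.refl _))).trans c⟩⟩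
      · iterate 8 right
        left
        exact ⟨a, b, ha, ha3, hb, hb3, ⟨e⟩⟩
  · obtain ⟨a, b, ha, hb, ψ, hψ, hran⟩ := rot m hmodd G
    by_cases hrot : ∃ i j, (sr i, sr j) ∈ G
    · obtain ⟨i, j, hij⟩ := hrot
      let φ : G := ⟨(sr i, sr j), hij⟩
      have h2 : φ * φ = 1 := by apply Subtype.ext; simp [φ]
      have hφ : φ ∉ ψ.range := by rw [hran]; simp [φ]
      have hinv : ∀ g, φ * ψ g * φ⁻¹ = (ψ g)⁻¹ := by
        intro g
        obtain ⟨k, l, hkl⟩ := (hran (ψ g)).1 ⟨g, rfl⟩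
        apply Subtype.ext
        simp [φ, hkl]
      have hcov : ∀ h, h ∈ ψ.range ∨ φ * h ∈ ψ.range := by
        intro x
        rw [hran, hran]
        rcases hall x x.2 with h | ⟨k, l, hkl⟩
        · left; exact h
        · right; exact ⟨k - i, l - j, by simp [φ, hkl]⟩
      have main : ∀ n, (Multiplicative (ZMod a) × Multiplicative (ZMod b) ≃*
          Multiplicative (ZMod n)) → Nonempty (G ≃* DihedralGroup n) := by
        intro n f
        have hr : ∀ x, x ∈ (ψ.comp f.symm.toMonoidHom).range ↔ x ∈ ψ.range := by
          intro x
          constructor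
          · rintro ⟨g, rfl⟩
            exact ⟨_, rfl⟩
          · rintro ⟨g, rfl⟩
            exact ⟨f g, by simp⟩
        refine dih n (ψ.comp f.symm.toMonoidHom) (hψ.comp f.symm.injective) φ h2 ?_ ?_ ?_
        · rw [hr]; exact hφ
        · intro g; exact hinv _
        · intro x; rw [hr, hr]; exact hcov x
      rcases odd_cases ha with rfl | ha3
      · obtain ⟨t⟩ := triv_prod (Multiplicative (ZMod b))
        obtain ⟨e⟩ := main b t
        rcases odd_cases hb with rfl | hb3
        · left; exact ⟨e.trans d1⟩
        · right; right; right; right; left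
          exact ⟨b, hb, hb3, ⟨e⟩⟩
      · rcases odd_cases hb with rfl | hb3
        · obtain ⟨t⟩ := prod_triv (Multiplicative (ZMod a))
          obtain ⟨e⟩ := main a t
          right; right; right; right; left
          exact ⟨a, ha, ha3, ⟨e⟩⟩
        · iterate 9 right
          refine ⟨a, b, ha, ha3, hb, hb3, ψ.range, ⟨(MonoidHom.ofInjective hψ).symm⟩, ?_,
            φ, hφ, by rw [pow_two, h2], ?_⟩
          · rw [Subgroup.index_eq_two_iff]
            refine ⟨φ, fun x => ?_⟩
            rw [hran, hran]
            rcases hall x x.2 with ⟨k, l, hkl⟩ | ⟨k, l, hkl⟩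
            · right
              refine ⟨⟨k, l, hkl⟩, ?_⟩
              simp [φ, hkl]
            · left
              refine ⟨⟨i - k, j - l, by simp [φ, hkl]⟩, ?_⟩
              simp [hkl]
          · rintro _ ⟨g, rfl⟩
            exact hinv g
    · have hsurj : Function.Surjective ψ := by
        intro x
        refine (hran x).2 ?_
        rcases hall x x.2 with h | ⟨k, l, hkl⟩
        · exact h
        · exact absurd ⟨k, l, hkl ▸ x.2⟩ hrot
      have e := (MulEquiv.ofBijective ψ ⟨hψ, hsurj⟩).symm
      rcases odd_cases ha with rfl | ha3
      · obtain ⟨t⟩ := triv_prod (Multiplicative (ZMod b))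
        rcases odd_cases hb with rfl | hb3
        · exfalso
          apply hG
          have : Subsingleton (Multiplicative (ZMod 1)) :=
            inferInstanceAs (Subsingleton (Fin 1))
          have : Subsingleton G := (e.trans t).toEquiv.subsingleton
          exact Subgroup.eq_bot_of_subsingleton G
        · right; left
          exact ⟨b, hb, hb3, ⟨e.trans t⟩⟩
      · rcases odd_cases hb with rfl | hb3
        · obtain ⟨t⟩ := prod_triv (Multiplicative (ZMod a))
          right; left
          exact ⟨a, ha, ha3, ⟨e.trans t⟩⟩
        · iterate 6 right
          left
          exact ⟨a, b, ha, ha3, hb, hb3, ⟨e⟩⟩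
end

section
/- Let m ≥ 3 be odd and let G be a subgroup of DihedralGroup m × DihedralGroup m. (i) If (x, y) ∈ G where x is a reflection (x = sr a for some a) and y is a rotation (y = r b for some b), then (1, y) ∈ G and (x, 1) ∈ G. (ii) If (x, y) ∈ G where x is a rotation (x = r a for some a) and y is a reflection (y = sr b for some b), then (x, 1) ∈ G and (1, y) ∈ G. -/
theorem aux_sr_pow (m : ℕ) (hmodd : Odd m) (a : ZMod m) :
    (DihedralGroup.sr a) ^ m = DihedralGroup.sr a := by
  obtain ⟨k, hk⟩ := hmodd
  have h2 : (DihedralGroup.sr a) ^ 2 = 1 := by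
    rw [pow_two, DihedralGroup.sr_mul_self]
  have h : (DihedralGroup.sr a) ^ (2 * k + 1) = DihedralGroup.sr a := by
    rw [pow_succ, pow_mul, h2, one_pow, one_mul]
  rwa [← hk] at h

theorem aux_r_pow (m : ℕ) (b : ZMod m) :
    (DihedralGroup.r b) ^ m = 1 := by
  rw [DihedralGroup.r_pow, ZMod.natCast_self, mul_zero, DihedralGroup.r_zero]

theorem stmt1 (m : ℕ) (hm : 3 ≤ m) (hmodd : Odd m)
    (G : Subgroup (DihedralGroup m × DihedralGroup m)) :
    (∀ a b : ZMod m, (DihedralGroup.sr a, DihedralGroup.r b) ∈ G →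
      ((1 : DihedralGroup m), DihedralGroup.r b) ∈ G ∧
      (DihedralGroup.sr a, (1 : DihedralGroup m)) ∈ G) ∧
    (∀ a b : ZMod m, (DihedralGroup.r a, DihedralGroup.sr b) ∈ G →
      (DihedralGroup.r a, (1 : DihedralGroup m)) ∈ G ∧
      ((1 : DihedralGroup m), DihedralGroup.sr b) ∈ G) := by
  refine ⟨fun a b h => ?_, fun a b h => ?_⟩
  · have h1 := G.pow_mem h m
    rw [Prod.pow_mk, aux_sr_pow m hmodd, aux_r_pow] at h1
    have h2 := G.mul_mem h1 h
    rw [Prod.mk_mul_mk, DihedralGroup.sr_mul_self, one_mul] at h2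
    exact ⟨h2, h1⟩
  · have h1 := G.pow_mem h m
    rw [Prod.pow_mk, aux_sr_pow m hmodd, aux_r_pow] at h1
    have h2 := G.mul_mem h1 h
    rw [Prod.mk_mul_mk, DihedralGroup.sr_mul_self, one_mul] at h2
    exact ⟨h2, h1⟩
end

section
/- Let m ≥ 3 be odd and let G be a subgroup of DihedralGroup m × DihedralGroup m. Suppose (sr k, 1) ∈ G for some k in ZMod m, and (r a, r b) ∈ G for some a, b in ZMod m. Then (r a, 1) ∈ G and (1, r b) ∈ G. -/
theorem stmt2 (m : ℕ) (hm : 3 ≤ m) (hmodd : Odd m)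
    (G : Subgroup (DihedralGroup m × DihedralGroup m))
    (k : ZMod m) (hk : (DihedralGroup.sr k, (1 : DihedralGroup m)) ∈ G)
    (a b : ZMod m) (hab : (DihedralGroup.r a, DihedralGroup.r b) ∈ G) :
    (DihedralGroup.r a, (1 : DihedralGroup m)) ∈ G ∧
    ((1 : DihedralGroup m), DihedralGroup.r b) ∈ G := by
  obtain ⟨t, ht⟩ := hmodd
  have hz : (2 : ZMod m) * t + 1 = 0 := by
    have h := ZMod.natCast_self m
    have h2 : ((2 * t + 1 : ℕ) : ZMod m) = 0 := by rw [← ht]; exact h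
    exact_mod_cast h2
  have h1 := G.pow_mem (G.mul_mem hab (G.mul_mem (G.mul_mem hk hab) hk)) (t + 1)
  have h2 : ((1 : DihedralGroup m), DihedralGroup.r b) ∈ G := by
    convert h1 using 1
    simp only [Prod.mk_mul_mk, Prod.pow_mk, DihedralGroup.one_def, DihedralGroup.sr_mul_r,
      DihedralGroup.sr_mul_sr, DihedralGroup.r_mul_r, DihedralGroup.r_pow, Prod.mk.injEq,
      DihedralGroup.r.injEq]
    push_cast
    constructor
    · ring
    · linear_combination (-b) * hz
  refine ⟨?_, h2⟩
  have h3 := G.mul_mem hab (G.inv_mem h2)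
  simpa using h3
end

section
/- Let X be a finite type with at least 7 elements and let α, β be permutations of X such that α^2 = 1, β^2 = 1, α*β = β*α, and each of α, β, and α*β has at most 2 fixed points. Then there exists v in X such that the four points v, α v, β v, (α*β) v are pairwise distinct. -/
theorem stmt7 (X : Type*) [Fintype X] (hcard : 7 ≤ Fintype.card X)
    (α β : Equiv.Perm X) (hα : α ^ 2 = 1) (hβ : β ^ 2 = 1)
    (hcomm : α * β = β * α)
    (hfα : {x | α x = x}.ncard ≤ 2) (hfβ : {x | β x = x}.ncard ≤ 2)
    (hfαβ : {x | (α * β) x = x}.ncard ≤ 2) :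
    ∃ v : X, v ≠ α v ∧ v ≠ β v ∧ v ≠ (α * β) v ∧
      α v ≠ β v ∧ α v ≠ (α * β) v ∧ β v ≠ (α * β) v := by
  obtain ⟨v, hv⟩ : ∃ v : X, v ∉ {x | α x = x} ∪ {x | β x = x} ∪ {x | (α * β) x = x} := by
    by_contra! h
    have hu : {x | α x = x} ∪ {x | β x = x} ∪ {x | (α * β) x = x} = Set.univ :=
      Set.eq_univ_of_forall h
    have h1 := Set.ncard_union_le ({x | α x = x} ∪ {x | β x = x}) {x | (α * β) x = x}
    have h2 := Set.ncard_union_le {x | α x = x} {x | β x = x}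
    rw [hu, Set.ncard_univ, Nat.card_eq_fintype_card] at h1
    omega
  simp only [Set.mem_union, Set.mem_setOf_eq, not_or] at hv
  obtain ⟨⟨ha, hb⟩, hc⟩ := hv
  refine ⟨v, Ne.symm ha, Ne.symm hb, Ne.symm hc, fun h => hc ?_, fun h => hb ?_, fun h => ha ?_⟩
  · rw [Equiv.Perm.mul_apply, ← h, ← Equiv.Perm.mul_apply, ← pow_two, hα, Equiv.Perm.one_apply]
  · exact (α.injective h).symm
  · rw [hcomm] at h
    exact (β.injective h).symm
end

section
/- Let X be a finite type and let α, β be permutations of X with α*β = β*α such that the cyclic subgroups generated by α and by β intersect trivially, and such that every permutation of the form α^i * β^j (i, j integers) which is not the identity has at most 3 fixed points. Let v in X be such that the orbit of v under the cyclic subgroup generated by α has exactly r elements and the orbit of v under the cyclic subgroup generated by β has exactly s elements, where r ≥ 3, s ≥ 3, and not both r = 3 and s = 3. Then the intersection of these two orbits equals {v}. -/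
theorem stmt10 (X : Type*) [Fintype X] (α β : Equiv.Perm X) (hcomm : α * β = β * α)
    (htriv : Subgroup.zpowers α ⊓ Subgroup.zpowers β = ⊥)
    (hfix : ∀ i j : ℤ, α ^ i * β ^ j ≠ 1 → {x | (α ^ i * β ^ j) x = x}.ncard ≤ 3)
    (r s : ℕ) (hr : 3 ≤ r) (hs : 3 ≤ s) (hrs : ¬(r = 3 ∧ s = 3))
    (v : X)
    (horba : {x | ∃ g ∈ Subgroup.zpowers α, g v = x}.ncard = r)
    (horbb : {x | ∃ g ∈ Subgroup.zpowers β, g v = x}.ncard = s) :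
    {x | ∃ g ∈ Subgroup.zpowers α, g v = x} ∩
      {x | ∃ g ∈ Subgroup.zpowers β, g v = x} = {v} := by
  have hc : Commute α β := hcomm
  ext w
  constructor
  · rintro ⟨⟨g, ⟨i, rfl⟩, hw⟩, ⟨h, ⟨j, rfl⟩, hw'⟩⟩
    simp only at hw hw'
    have hv : (α ^ (-i) * β ^ j) v = v := by
      rw [Equiv.Perm.mul_apply, hw', ← hw, ← Equiv.Perm.mul_apply, ← zpow_add]
      simp
    have key : ∀ k : Equiv.Perm X, Commute (α ^ (-i) * β ^ j) k →
        (α ^ (-i) * β ^ j) (k v) = k v := by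
      intro k hk
      rw [← Equiv.Perm.mul_apply, hk.eq, Equiv.Perm.mul_apply, hv]
    have h1 : α ^ (-i) * β ^ j = 1 := by
      by_contra hne
      have h3 := hfix _ _ hne
      have ha : r ≤ 3 := by
        rw [← horba]
        refine le_trans (Set.ncard_le_ncard ?_ (Set.toFinite _)) h3
        rintro x ⟨k, ⟨n, rfl⟩, rfl⟩
        exact key _ (((Commute.refl α).zpow_zpow _ _).mul_left (hc.symm.zpow_zpow _ _))
      have hb : s ≤ 3 := by
        rw [← horbb]
        refine le_trans (Set.ncard_le_ncard ?_ (Set.toFinite _)) h3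
        rintro x ⟨k, ⟨n, rfl⟩, rfl⟩
        exact key _ ((hc.zpow_zpow _ _).mul_left ((Commute.refl β).zpow_zpow _ _))
      omega
    have h2 : α ^ i = β ^ j := by
      rw [zpow_neg, inv_mul_eq_one] at h1
      exact h1
    have h4 : α ^ i ∈ Subgroup.zpowers α ⊓ Subgroup.zpowers β :=
      ⟨⟨i, rfl⟩, ⟨j, h2.symm⟩⟩
    rw [htriv, Subgroup.mem_bot] at h4
    rw [h4] at hw
    exact hw.symm
  · rintro rfl
    exact ⟨⟨1, one_mem _, rfl⟩, ⟨1, one_mem _, rfl⟩⟩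
end

section
/- Let α, β, γ be permutations of a type X with γ^2 = 1, α*γ = γ*α⁻¹, β*γ = γ*β, and α*β = β*α. If for some integers i, j and some v in X the permutation γ*α^i*β^j satisfies (γ*α^i*β^j) v = v and (γ*α^i*β^j) ((α*β) v) = (α*β) v, then α^2 v = v. -/
theorem stmt12 (X : Type*) (α β γ : Equiv.Perm X) (hγ : γ ^ 2 = 1)
    (h1 : α * γ = γ * α⁻¹) (h2 : β * γ = γ * β) (h3 : α * β = β * α)
    (i j : ℤ) (v : X)
    (hv1 : (γ * α ^ i * β ^ j) v = v)
    (hv2 : (γ * α ^ i * β ^ j) ((α * β) v) = (α * β) v) :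
    (α ^ 2) v = v := by
  have hab : Commute α β := h3
  have ca : Commute (α ^ i * β ^ j) (α * β) :=
    (((Commute.refl α).zpow_left i).mul_right (hab.zpow_left i)).mul_left
      ((hab.symm.zpow_left j).mul_right ((Commute.refl β).zpow_left j))
  have hγα : γ * α = α⁻¹ * γ := by
    rw [eq_inv_mul_iff_mul_eq, ← mul_assoc, h1, inv_mul_cancel_right]
  have key : (γ * α ^ i * β ^ j) * (α * β) = β * α⁻¹ * (γ * α ^ i * β ^ j) := by
    calc (γ * α ^ i * β ^ j) * (α * β) = γ * ((α ^ i * β ^ j) * (α * β)) := by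
          simp only [mul_assoc]
      _ = γ * ((α * β) * (α ^ i * β ^ j)) := by rw [ca.eq]
      _ = (γ * β) * α * (α ^ i * β ^ j) := by rw [h3]; simp only [mul_assoc]
      _ = β * (γ * α) * (α ^ i * β ^ j) := by rw [← h2]; simp only [mul_assoc]
      _ = _ := by rw [hγα]; simp only [mul_assoc]
  have h := hv2
  rw [← Equiv.Perm.mul_apply, key, Equiv.Perm.mul_apply, hv1, h3,
    Equiv.Perm.mul_apply, Equiv.Perm.mul_apply] at h
  have h' := β.injective h
  rw [pow_two, Equiv.Perm.mul_apply, ← h']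
  exact α.apply_symm_apply v
end

section
/- Let α, β, μ be permutations of a type X with μ^2 = 1, α*μ = μ*α⁻¹, β*μ = μ*β⁻¹, and α*β = β*α. If for some integers i, j and some v in X the permutation μ*α^i*β^j satisfies (μ*α^i*β^j) v = v and (μ*α^i*β^j) ((α*β) v) = (α*β) v, then α^(−2) v = β^2 v. -/
theorem stmt13 (X : Type*) (α β μ : Equiv.Perm X) (hμ : μ ^ 2 = 1)
    (h1 : α * μ = μ * α⁻¹) (h2 : β * μ = μ * β⁻¹) (h3 : α * β = β * α)
    (i j : ℤ) (v : X)
    (hv1 : (μ * α ^ i * β ^ j) v = v)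
    (hv2 : (μ * α ^ i * β ^ j) ((α * β) v) = (α * β) v) :
    (α ^ (-2 : ℤ)) v = (β ^ (2 : ℤ)) v := by
  have hc : Commute α β := h3
  have hcomm : Commute (α * β) (α ^ i * β ^ j) :=
    Commute.mul_right (((Commute.refl α).mul_left hc.symm).zpow_right i)
      ((hc.mul_left (Commute.refl β)).zpow_right j)
  have hm : (α * β) * μ = μ * (α * β)⁻¹ := by
    rw [mul_assoc, h2, ← mul_assoc, h1, mul_assoc, ← mul_inv_rev, h3]
  have key : (α * β) * ((μ * α ^ i * β ^ j) * (α * β)) = μ * α ^ i * β ^ j := by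
    calc (α * β) * ((μ * α ^ i * β ^ j) * (α * β))
        = ((α * β) * μ) * ((α ^ i * β ^ j) * (α * β)) := by simp only [mul_assoc]
      _ = (μ * (α * β)⁻¹) * ((α * β) * (α ^ i * β ^ j)) := by rw [hm, hcomm.eq]
      _ = μ * α ^ i * β ^ j := by group
  have h4 : (α * β) ((α * β) v) = v := by
    have := congrArg (fun f : Equiv.Perm X => f v) key
    simp only [Equiv.Perm.mul_apply] at this hv1 hv2 ⊢
    rw [hv2, hv1] at this
    exact this
  have h5 : α ^ (2 : ℤ) * β ^ (2 : ℤ) = (α * β) * (α * β) := by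
    rw [← hc.mul_zpow, zpow_two]
  rw [zpow_neg, Equiv.Perm.inv_eq_iff_eq, ← Equiv.Perm.mul_apply, h5]
  exact h4.symm
end
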